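/- arXiv:1212.3931 — 2 statements merged into one kernel-verified Lean document; each statement's English description precedes it below -/
import Mathlib

section
/- Let γ : ℝⁿ → ℝⁿ be bounded and measurable, and assume γ is weakly divergence free: ∫_{ℝⁿ} γ(x)·∇ψ(x) dx = 0 for every smooth compactly supported ψ : ℝⁿ → ℂ. Then for all smooth compactly supported u, φ : ℝ^{1+n} → ℂ (coordinates (t, x) ∈ ℝ × ℝⁿ), ∫∫_{ℝ^{1+n}} [ (γ(x)·∇_x u(t,x)) conj(∂_t φ(t,x)) − ∂_t u(t,x) (γ(x)·conj(∇_x φ(t,x))) ] dt dx = 0. In other words, the sesquilinear form associated to the coefficient matrix M_γ = [[0, γᵗ], [−γ, 0]] vanishes identically, so L is unchanged by adding M_γ to its coefficients. -/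
open MeasureTheory

lemma aux_deriv_smooth {E : Type*} [NormedAddCommGroup E] [NormedSpace ℝ E] {w : E → ℂ}
    (hw : ContDiff ℝ (⊤ : ℕ∞) w) (v : E) :
    ContDiff ℝ (⊤ : ℕ∞) (fun p => fderiv ℝ w p v) :=
  (hw.fderiv_right (m := (⊤ : ℕ∞)) (by norm_cast)).clm_apply contDiff_const

lemma aux_integrable {n : ℕ} (γ : (Fin n → ℝ) → (Fin n → ℝ))
    (hγmeas : Measurable γ) (Cγ : ℝ) (hγbdd : ∀ x, ‖γ x‖ ≤ Cγ)
    (w : ℝ × (Fin n → ℝ) → ℂ) (hw : Continuous w) (hs : HasCompactSupport w) (j : Fin n) :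
    Integrable (fun p : ℝ × (Fin n → ℝ) => (γ p.2 j : ℂ) * w p) := by
  have hwi : Integrable w := hw.integrable_of_hasCompactSupport hs
  refine hwi.bdd_mul (c := Cγ) ?_ ?_
  · have : Measurable (fun p : ℝ × (Fin n → ℝ) => (γ p.2 j : ℂ)) :=
      Complex.measurable_ofReal.comp
        ((measurable_pi_apply j).comp (hγmeas.comp measurable_snd))
    exact this.aestronglyMeasurable
  · refine Filter.Eventually.of_forall fun p => ?_
    rw [Complex.norm_real]
    exact (norm_le_pi_norm (γ p.2) j).trans (hγbdd _)

lemma aux_A {n : ℕ} (γ : (Fin n → ℝ) → (Fin n → ℝ))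
    (hγmeas : Measurable γ) (Cγ : ℝ) (hγbdd : ∀ x, ‖γ x‖ ≤ Cγ)
    (hdiv : ∀ ψ : (Fin n → ℝ) → ℂ, ContDiff ℝ (⊤ : ℕ∞) ψ → HasCompactSupport ψ →
      ∫ x : Fin n → ℝ, ∑ j, (γ x j : ℂ) * fderiv ℝ ψ x (Pi.single j 1) = 0)
    (w : ℝ × (Fin n → ℝ) → ℂ) (hw : ContDiff ℝ (⊤ : ℕ∞) w) (hs : HasCompactSupport w) :
    ∫ p : ℝ × (Fin n → ℝ), ∑ j, (γ p.2 j : ℂ) * fderiv ℝ w p (0, Pi.single j 1) = 0 := by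
  have hint : Integrable (fun p : ℝ × (Fin n → ℝ) =>
      ∑ j, (γ p.2 j : ℂ) * fderiv ℝ w p (0, Pi.single j 1)) :=
    integrable_finsetSum _ fun j _ => aux_integrable γ hγmeas Cγ hγbdd _
      (aux_deriv_smooth hw _).continuous (hs.fderiv_apply ℝ _) j
  rw [Measure.volume_eq_prod] at hint ⊢
  rw [integral_prod _ hint]
  refine integral_eq_zero_of_ae (Filter.Eventually.of_forall fun t => ?_)
  have h := hdiv (fun x => w (t, x)) (hw.comp (contDiff_const.prodMk contDiff_id)) ?_
  · simp only [Pi.zero_apply]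
    rw [← h]
    refine integral_congr_ae (Filter.Eventually.of_forall fun x => ?_)
    refine Finset.sum_congr rfl fun j _ => ?_
    congr 1
    have h1 : HasFDerivAt (fun x => w (t, x))
        ((fderiv ℝ w (t, x)).comp (ContinuousLinearMap.inr ℝ ℝ (Fin n → ℝ))) x :=
      ((hw.differentiable (by simp)) (t, x)).hasFDerivAt.comp x (hasFDerivAt_prodMk_right t x)
    rw [h1.fderiv]
    simp
  · refine HasCompactSupport.intro (hs.isCompact.image continuous_snd) fun x hx => ?_
    by_contra hne
    exact hx ⟨(t, x), subset_tsupport _ hne, rfl⟩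

lemma aux_B {n : ℕ} (γ : (Fin n → ℝ) → (Fin n → ℝ))
    (hγmeas : Measurable γ) (Cγ : ℝ) (hγbdd : ∀ x, ‖γ x‖ ≤ Cγ)
    (w : ℝ × (Fin n → ℝ) → ℂ) (hw : ContDiff ℝ (⊤ : ℕ∞) w) (hs : HasCompactSupport w)
    (j : Fin n) :
    ∫ p : ℝ × (Fin n → ℝ), (γ p.2 j : ℂ) * fderiv ℝ w p (1, 0) = 0 := by
  have hint := aux_integrable γ hγmeas Cγ hγbdd _
      (aux_deriv_smooth hw (1, 0)).continuous (hs.fderiv_apply ℝ _) j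
  rw [Measure.volume_eq_prod] at hint ⊢
  rw [integral_prod_symm _ hint]
  refine integral_eq_zero_of_ae (Filter.Eventually.of_forall fun x => ?_)
  simp only [Pi.zero_apply]
  rw [integral_const_mul]
  have hc : ∀ f : ℝ × (Fin n → ℝ) → ℂ, HasCompactSupport f →
      HasCompactSupport (fun t => f (t, x)) := fun f hf => by
    refine HasCompactSupport.intro (hf.isCompact.image continuous_fst) fun t ht => ?_
    by_contra hne
    exact ht ⟨(t, x), subset_tsupport _ hne, rfl⟩
  have hd : ∀ t, HasDerivAt (fun t => w (t, x)) (fderiv ℝ w (t, x) (1, 0)) t := fun t => by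
    have h1 : HasFDerivAt (fun t => w (t, x))
        ((fderiv ℝ w (t, x)).comp (ContinuousLinearMap.inl ℝ ℝ (Fin n → ℝ))) t :=
      ((hw.differentiable (by simp)) (t, x)).hasFDerivAt.comp t (hasFDerivAt_prodMk_left t x)
    simpa using h1.hasDerivAt
  have hcont : Continuous fun t : ℝ => ((t, x) : ℝ × (Fin n → ℝ)) := by fun_prop
  rw [integral_eq_zero_of_hasDerivAt_of_integrable hd
    (((aux_deriv_smooth hw (1, 0)).continuous.comp hcont).integrable_of_hasCompactSupport
      (hc _ (hs.fderiv_apply ℝ _)))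
    ((hw.continuous.comp hcont).integrable_of_hasCompactSupport (hc _ hs)), mul_zero]

theorem stmt10 {n : ℕ} (γ : (Fin n → ℝ) → (Fin n → ℝ))
    (hγmeas : Measurable γ) (Cγ : ℝ) (hγbdd : ∀ x, ‖γ x‖ ≤ Cγ)
    (hdiv : ∀ ψ : (Fin n → ℝ) → ℂ, ContDiff ℝ (⊤ : ℕ∞) ψ → HasCompactSupport ψ →
      ∫ x : Fin n → ℝ, ∑ j, (γ x j : ℂ) * fderiv ℝ ψ x (Pi.single j 1) = 0)
    (u φ : ℝ × (Fin n → ℝ) → ℂ)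
    (hu : ContDiff ℝ (⊤ : ℕ∞) u) (husupp : HasCompactSupport u)
    (hφ : ContDiff ℝ (⊤ : ℕ∞) φ) (hφsupp : HasCompactSupport φ) :
    ∫ p : ℝ × (Fin n → ℝ),
      ((∑ j, (γ p.2 j : ℂ) * fderiv ℝ u p (0, Pi.single j 1)) *
          (starRingEnd ℂ) (fderiv ℝ φ p (1, 0)) -
        fderiv ℝ u p (1, 0) *
          (∑ j, (γ p.2 j : ℂ) * (starRingEnd ℂ) (fderiv ℝ φ p (0, Pi.single j 1)))) = 0 := by
  obtain ⟨ψ, hψdef⟩ : ∃ ψ : ℝ × (Fin n → ℝ) → ℂ, ψ = fun p => Complex.conjCLE (φ p) := ⟨_, rfl⟩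
  have hψ : ContDiff ℝ (⊤ : ℕ∞) ψ := by
    rw [hψdef]; exact Complex.conjCLE.contDiff.comp hφ
  have hconj : ∀ p v, (starRingEnd ℂ) (fderiv ℝ φ p v) = fderiv ℝ ψ p v := fun p v => by
    have h := ((Complex.conjCLE : ℂ →L[ℝ] ℂ).hasFDerivAt (x := φ p)).comp p
      ((hφ.differentiable (by simp)) p).hasFDerivAt
    have h2 : HasFDerivAt ψ ((Complex.conjCLE : ℂ →L[ℝ] ℂ).comp (fderiv ℝ φ p)) p := by rw [hψdef]; exact h
    rw [h2.fderiv]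
    simp
  simp only [hconj]
  have hdψ : ∀ v, ContDiff ℝ (⊤ : ℕ∞) (fun p => fderiv ℝ ψ p v) := aux_deriv_smooth hψ
  have hprod : ∀ v, ContDiff ℝ (⊤ : ℕ∞) (fun p => u p * fderiv ℝ ψ p v) :=
    fun v => hu.mul (hdψ v)
  have hprods : ∀ v, HasCompactSupport (fun p => u p * fderiv ℝ ψ p v) :=
    fun v => husupp.mul_right
  have hder : ∀ p v v', fderiv ℝ (fun p => u p * fderiv ℝ ψ p v) p v' =
      u p * fderiv ℝ (fderiv ℝ ψ) p v' v + fderiv ℝ ψ p v * fderiv ℝ u p v' := fun p v v' => by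
    rw [fderiv_fun_mul ((hu.differentiable (by simp)) p) (((hdψ v).differentiable (by simp)) p)]
    have hd2 : DifferentiableAt ℝ (fderiv ℝ ψ) p :=
      ((hψ.fderiv_right (m := (⊤ : ℕ∞)) (by norm_cast)).differentiable (by simp)) p
    have := (hd2.hasFDerivAt.clm_apply (hasFDerivAt_const v p)).fderiv
    rw [this]
    simp
  have hsymm : ∀ p v v', fderiv ℝ (fderiv ℝ ψ) p v' v = fderiv ℝ (fderiv ℝ ψ) p v v' :=
    fun p v v' => (hψ.contDiffAt.isSymmSndFDerivAt
      (by rw [minSmoothness_of_isRCLikeNormedField]; exact WithTop.coe_le_coe.mpr le_top)) v' v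
  have hA := aux_A γ hγmeas Cγ hγbdd hdiv _ (hprod (1, 0)) (hprods (1, 0))
  have hB := fun j => aux_B γ hγmeas Cγ hγbdd _ (hprod (0, Pi.single j 1))
    (hprods (0, Pi.single j 1)) j
  have iA : Integrable (fun p : ℝ × (Fin n → ℝ) => ∑ j, (γ p.2 j : ℂ) *
      fderiv ℝ (fun p => u p * fderiv ℝ ψ p (1, 0)) p (0, Pi.single j 1)) :=
    integrable_finsetSum _ fun j _ => aux_integrable γ hγmeas Cγ hγbdd _
      (aux_deriv_smooth (hprod _) _).continuous ((hprods _).fderiv_apply ℝ _) j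
  have iB : ∀ j ∈ Finset.univ, Integrable (fun p : ℝ × (Fin n → ℝ) => (γ p.2 j : ℂ) *
      fderiv ℝ (fun p => u p * fderiv ℝ ψ p (0, Pi.single j 1)) p (1, 0)) :=
    fun j _ => aux_integrable γ hγmeas Cγ hγbdd _
      (aux_deriv_smooth (hprod _) _).continuous ((hprods _).fderiv_apply ℝ _) j
  have hB' := integral_finsetSum Finset.univ iB
  simp only [hB, Finset.sum_const_zero] at hB'
  have key := integral_sub iA (integrable_finsetSum _ iB)
  rw [hA, hB', sub_zero] at key
  rw [← key]
  refine integral_congr_ae (Filter.Eventually.of_forall fun p => ?_)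
  simp only [hder]
  rw [Finset.sum_mul, Finset.mul_sum, ← Finset.sum_sub_distrib, ← Finset.sum_sub_distrib]
  refine Finset.sum_congr rfl fun j _ => ?_
  rw [hsymm p (1, 0) (0, Pi.single j 1)]
  ring
end

section
/- There exists a constant C > 0, depending only on n, such that for every Schwartz function f : ℝⁿ → ℂ there exists a function u : [0, ∞) × ℝⁿ → ℂ, continuous on [0, ∞) × ℝⁿ and smooth on (0, ∞) × ℝⁿ, with u(0, x) = f(x) for all x ∈ ℝⁿ and ∫_0^∞ ∫_{ℝⁿ} |∇_{t,x} u(t,x)|² dx dt ≤ C ∫_{ℝⁿ} ‖ξ‖ |f̂(ξ)|² dξ. In other words, the trace map from Ḣ¹(ℝ^{1+n}_+) to Ḣ^{1/2}(ℝⁿ) is onto. -/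
open MeasureTheory
open scoped ENNReal FourierTransform SchwartzMap

lemma gau_tg {E : Type*} [NormedAddCommGroup E] [InnerProductSpace ℝ E] (c : ℝ) (hc : 0 ≤ c) :
    (fun ξ : E => Real.exp (-c * ‖ξ‖ ^ 2)).HasTemperateGrowth := by
  refine Function.HasTemperateGrowth.comp' (g := fun y : ℝ => Real.exp (-c * y))
    (f := fun ξ : E => ‖ξ‖ ^ 2) (t := Set.Ici 0) ?_ (uniqueDiffOn_Ici 0) ?_ ?_
    (Function.hasTemperateGrowth_norm_sq E)
  · rintro _ ⟨x, rfl⟩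
    simp
  · fun_prop
  · intro N
    refine ⟨0, (1 + c) ^ N, by positivity, fun n hn x hx => ?_⟩
    rw [norm_iteratedFDerivWithin_eq_norm_iteratedDerivWithin,
      iteratedDerivWithin_eq_iteratedDeriv (uniqueDiffOn_Ici 0) (by fun_prop) hx,
      iteratedDeriv_exp_const_mul]
    have hx' : 0 ≤ x := hx
    simp only [norm_mul, norm_pow, norm_neg, Real.norm_eq_abs, abs_of_nonneg hc, Real.abs_exp,
      pow_zero, mul_one]
    calc c ^ n * Real.exp (-c * x) ≤ (1 + c) ^ n * 1 := by
          gcongr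
          · linarith
          · exact Real.exp_le_one_iff.2 (by nlinarith)
      _ ≤ (1 + c) ^ N := by
          rw [mul_one]
          exact pow_le_pow_right₀ (by linarith) hn

lemma plancherel_inv {E : Type*} [NormedAddCommGroup E] [InnerProductSpace ℝ E]
    [FiniteDimensional ℝ E] [MeasurableSpace E] [BorelSpace E] (g : 𝓢(E, ℂ)) :
    ∫⁻ x, (‖𝓕⁻ (⇑g) x‖₊ : ℝ≥0∞) ^ 2 = ∫⁻ ξ, (‖g ξ‖₊ : ℝ≥0∞) ^ 2 := by
  have key : ∀ h : 𝓢(E, ℂ), ∫⁻ ξ, (‖h ξ‖₊ : ℝ≥0∞) ^ 2 = ENNReal.ofReal (∫ x, ‖h x‖ ^ 2) := by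
    intro h
    rw [ofReal_integral_eq_lintegral_ofReal]
    · congr 1 with x
      rw [ENNReal.ofReal_pow (norm_nonneg _), ofReal_norm, enorm_eq_nnnorm]
    · exact (h.memLp 2 volume).integrable_norm_pow (by simp)
    · exact Filter.Eventually.of_forall fun x => by positivity
  rw [← SchwartzMap.fourierInv_coe, key, key, ← SchwartzMap.integral_norm_sq_fourier (𝓕⁻ g)]
  simp

/-- The extension. -/
noncomputable def ext13 {E : Type*} [NormedAddCommGroup E] [InnerProductSpace ℝ E]
    [FiniteDimensional ℝ E] [MeasurableSpace E] [BorelSpace E] (F : 𝓢(E, ℂ)) (p : ℝ × E) : ℂ :=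
  𝓕⁻ (fun ξ => Real.exp (-(2 * Real.pi ^ 2 * p.1 ^ 2) * ‖ξ‖ ^ 2) • F ξ) p.2

section
variable {E : Type*} [NormedAddCommGroup E] [InnerProductSpace ℝ E]
    [FiniteDimensional ℝ E] [MeasurableSpace E] [BorelSpace E] (F : 𝓢(E, ℂ))
open ProbabilityTheory

/-- bilinear pairing -/
noncomputable def pair13 (E : Type*) [NormedAddCommGroup E] [InnerProductSpace ℝ E] :
    (ℝ × E) →L[ℝ] (ℝ × E) →L[ℝ] ℝ :=
  ((innerSL ℝ : ℝ →L[ℝ] ℝ →L[ℝ] ℝ).bilinearComp (ContinuousLinearMap.fst ℝ ℝ E)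
    (ContinuousLinearMap.fst ℝ ℝ E)) -
  ((innerSL ℝ : E →L[ℝ] E →L[ℝ] ℝ).bilinearComp (ContinuousLinearMap.snd ℝ ℝ E)
    (ContinuousLinearMap.snd ℝ ℝ E))

lemma pair13_apply (v w : ℝ × E) : pair13 E v w = v.1 * w.1 - inner ℝ v.2 w.2 := by
  simp [pair13, mul_comm]

lemma moment13 (k : ℕ) : Integrable (fun z : ℝ × E => ‖(z.1 * ‖z.2‖, z.2)‖ ^ k * ‖F z.2‖)
    ((gaussianReal 0 1).prod volume) := by
  have h1 : Integrable (fun s : ℝ => (1 + |s|) ^ k) (gaussianReal 0 1) := by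
    have : MemLp (fun s : ℝ => 1 + |s|) k (gaussianReal 0 1) :=
      MemLp.add (f := fun _ : ℝ => (1:ℝ)) (g := fun s : ℝ => |s|) (memLp_const (1:ℝ))
        (memLp_id_gaussianReal' (k : ℝ≥0∞) (by simp)).abs
    have h2 := this.integrable_norm_pow'
    refine h2.congr (Filter.Eventually.of_forall fun s => ?_)
    simp only [Real.norm_eq_abs]
    rw [abs_of_nonneg (by positivity)]
  refine (h1.mul_prod (F.integrable_pow_mul volume k)).mono' ?_ ?_
  · exact Continuous.aestronglyMeasurable (by have := F.continuous; fun_prop)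
  · refine Filter.Eventually.of_forall fun z => ?_
    rw [Real.norm_of_nonneg (by positivity), ← mul_assoc, ← mul_pow]
    gcongr
    rw [Prod.norm_def]
    simp only [norm_mul, Real.norm_eq_abs, abs_norm]
    have := norm_nonneg z.2
    have := abs_nonneg z.1
    apply max_le <;> nlinarith

lemma smooth13 : ContDiff ℝ (⊤ : ℕ∞) (ext13 F) := by
  have hT : Continuous (fun z : ℝ × E => (z.1 * ‖z.2‖, z.2)) := by fun_prop
  have hF := F.continuous
  have h := VectorFourier.contDiff_fourierIntegral (pair13 E)
    (μ := ((gaussianReal 0 1).prod volume).map (fun z : ℝ × E => (z.1 * ‖z.2‖, z.2)))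
    (f := fun v => F v.2) (N := ⊤) (by
      intro k _
      rw [integrable_map_measure (Continuous.aestronglyMeasurable (by fun_prop)) hT.aemeasurable]
      exact moment13 F k)
  suffices hE : ext13 F = VectorFourier.fourierIntegral 𝐞
      (((gaussianReal 0 1).prod volume).map (fun z : ℝ × E => (z.1 * ‖z.2‖, z.2)))
      (pair13 E).toLinearMap₁₂ (fun v => F v.2) by
    rw [hE]
    exact h
  funext p
  have hint : Integrable (fun z : ℝ × E => F z.2) ((gaussianReal 0 1).prod volume) := by
    have := (integrable_const (1:ℂ) (μ := gaussianReal 0 1)).mul_prod (F.integrable (μ := volume))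
    simpa using this
  change _ = ∫ v, 𝐞 (-(pair13 E v p)) • F v.2 ∂_
  rw [integral_map hT.aemeasurable
    (Continuous.aestronglyMeasurable (by
      have : Continuous fun v : ℝ × E => pair13 E v p := by fun_prop
      have := Real.continuous_fourierChar
      fun_prop))]
  simp only [pair13_apply]
  rw [integral_prod_symm]
  · rw [ext13, Real.fourierInv_eq]
    congr 1 with ξ
    have e1 : ∀ s : ℝ, 𝐞 (-(s * ‖ξ‖ * p.1 - inner ℝ ξ p.2)) • F ξ =
      Complex.exp (s * ((-(2 * Real.pi * ‖ξ‖ * p.1) : ℝ) : ℂ) * Complex.I) * 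
        (𝐞 (inner ℝ ξ p.2) • F ξ) := by
      intro s
      simp only [Circle.smul_def, Real.fourierChar_apply, smul_eq_mul]
      rw [← mul_assoc, ← Complex.exp_add]
      congr 2
      push_cast
      ring
    simp only [e1]
    rw [integral_mul_const]
    have e2 := charFun_gaussianReal (μ := 0) (v := 1) (-(2 * Real.pi * ‖ξ‖ * p.1))
    rw [charFun_apply_real] at e2
    have e3 : ∀ s : ℝ, Complex.exp (s * ((-(2 * Real.pi * ‖ξ‖ * p.1) : ℝ) : ℂ) * Complex.I) =
      Complex.exp (((-(2 * Real.pi * ‖ξ‖ * p.1) : ℝ) : ℂ) * s * Complex.I) := by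
      intro s; ring_nf
    simp only [e3]
    rw [e2, smul_comm, ← smul_eq_mul, Complex.real_smul]
    rw [smul_eq_mul]
    congr 1
    push_cast
    congr 1
    ring
  · refine hint.mono (Continuous.aestronglyMeasurable (by
      have := Real.continuous_fourierChar
      fun_prop)) (Filter.Eventually.of_forall fun z => ?_)
    rw [Circle.norm_smul]

lemma deriv_t13 (t : ℝ) (x : E) : HasDerivAt (fun t => ext13 F (t, x))
    (𝓕⁻ (fun ξ => (-(4 * Real.pi ^ 2 * t) * ‖ξ‖ ^ 2 *
      Real.exp (-(2 * Real.pi ^ 2 * t ^ 2) * ‖ξ‖ ^ 2)) • F ξ) x) t := by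
  have hF := F.continuous
  have hc := Real.continuous_fourierChar
  simp only [ext13, Real.fourierInv_eq]
  refine (hasDerivAt_integral_of_dominated_loc_of_deriv_le (μ := volume)
    (s := Metric.ball t 1)
    (bound := fun ξ => 4 * Real.pi ^ 2 * (|t| + 1) * (‖ξ‖ ^ 2 * ‖F ξ‖))
    (F := fun (t : ℝ) (ξ : E) => 𝐞 (inner ℝ ξ x) •
      (Real.exp (-(2 * Real.pi ^ 2 * t ^ 2) * ‖ξ‖ ^ 2) • F ξ))
    (F' := fun (t : ℝ) (ξ : E) => 𝐞 (inner ℝ ξ x) • ((-(4 * Real.pi ^ 2 * t) * ‖ξ‖ ^ 2 *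
      Real.exp (-(2 * Real.pi ^ 2 * t ^ 2) * ‖ξ‖ ^ 2)) • F ξ))
    (Metric.ball_mem_nhds t one_pos) ?_ ?_ ?_ ?_ ?_ ?_).2
  · exact Filter.Eventually.of_forall fun t => Continuous.aestronglyMeasurable (by fun_prop)
  · refine (F.integrable (μ := volume)).mono (Continuous.aestronglyMeasurable (by fun_prop))
      (Filter.Eventually.of_forall fun ξ => ?_)
    rw [Circle.norm_smul, norm_smul, Real.norm_eq_abs, Real.abs_exp]
    apply mul_le_of_le_one_left (norm_nonneg _)
    rw [Real.exp_le_one_iff, neg_mul]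
    have : 0 ≤ 2 * Real.pi ^ 2 * t ^ 2 * ‖ξ‖ ^ 2 := by positivity
    linarith
  · exact Continuous.aestronglyMeasurable (by fun_prop)
  · refine Filter.Eventually.of_forall fun ξ s hs => ?_
    rw [Circle.norm_smul, norm_smul, norm_mul, norm_mul, Real.norm_eq_abs, Real.norm_eq_abs,
      Real.norm_eq_abs, Real.abs_exp, abs_neg, abs_mul, abs_of_nonneg (sq_nonneg ‖ξ‖),
      abs_of_nonneg (by positivity : 0 ≤ 4 * Real.pi ^ 2)]
    have h1 : |s| ≤ |t| + 1 := by
      rw [Metric.mem_ball, Real.dist_eq] at hs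
      have := abs_sub_abs_le_abs_sub s t
      linarith
    have h2 : Real.exp (-(2 * Real.pi ^ 2 * s ^ 2) * ‖ξ‖ ^ 2) ≤ 1 := by
      rw [Real.exp_le_one_iff, neg_mul]
      have : 0 ≤ 2 * Real.pi ^ 2 * s ^ 2 * ‖ξ‖ ^ 2 := by positivity
      linarith
    calc _ ≤ 4 * Real.pi ^ 2 * (|t| + 1) * ‖ξ‖ ^ 2 * 1 * ‖F ξ‖ := by gcongr
      _ = _ := by ring
  · exact (F.integrable_pow_mul volume 2).const_mul _
  · refine Filter.Eventually.of_forall fun ξ s hs => ?_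
    have h1 : HasDerivAt (fun s : ℝ => Real.exp (-(2 * Real.pi ^ 2 * s ^ 2) * ‖ξ‖ ^ 2))
        (-(4 * Real.pi ^ 2 * s) * ‖ξ‖ ^ 2 *
          Real.exp (-(2 * Real.pi ^ 2 * s ^ 2) * ‖ξ‖ ^ 2)) s := by
      have h0 : HasDerivAt (fun s : ℝ => -(2 * Real.pi ^ 2 * s ^ 2) * ‖ξ‖ ^ 2)
          (-(4 * Real.pi ^ 2 * s) * ‖ξ‖ ^ 2) s := by
        have := ((((hasDerivAt_id s).pow 2).const_mul (2 * Real.pi ^ 2)).neg).mul_const (‖ξ‖ ^ 2)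
        refine this.congr_deriv ?_
        simp only [id, Nat.cast_ofNat]
        ring
      convert h0.exp using 1
      ring
    simp only [Circle.smul_def]
    exact (h1.smul_const (F ξ)).const_smul ((𝐞 (inner ℝ ξ x) : Circle) : ℂ)

lemma fderiv_t13 (t : ℝ) (x : E) : fderiv ℝ (ext13 F) (t, x) (1, 0) =
    𝓕⁻ (fun ξ => (-(4 * Real.pi ^ 2 * t) * ‖ξ‖ ^ 2 *
      Real.exp (-(2 * Real.pi ^ 2 * t ^ 2) * ‖ξ‖ ^ 2)) • F ξ) x := by
  have h1 : HasFDerivAt (ext13 F) (fderiv ℝ (ext13 F) (t, x)) (t, x) :=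
    (((smooth13 F).differentiable (by simp)) (t, x)).hasFDerivAt
  have h2 : HasDerivAt (fun t : ℝ => (t, x)) ((1 : ℝ), (0 : E)) t :=
    (hasDerivAt_id t).prodMk (hasDerivAt_const t x)
  have h3 : HasDerivAt (fun t => ext13 F (t, x)) (fderiv ℝ (ext13 F) (t, x) (1, 0)) t :=
    HasFDerivAt.comp_hasDerivAt (l := ext13 F) (f := fun t : ℝ => (t, x)) t h1 h2
  exact h3.unique (deriv_t13 F t x)

/-- the Schwartz function of the time derivative -/
lemma energy_t13 (t : ℝ) : ∫⁻ x, (‖fderiv ℝ (ext13 F) (t, x) (1, 0)‖₊ : ℝ≥0∞) ^ 2 =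
    ∫⁻ ξ, (‖(-(4 * Real.pi ^ 2 * t) * ‖ξ‖ ^ 2 *
      Real.exp (-(2 * Real.pi ^ 2 * t ^ 2) * ‖ξ‖ ^ 2)) • F ξ‖₊ : ℝ≥0∞) ^ 2 := by
  have hg := gau_tg (E := E) (2 * Real.pi ^ 2 * t ^ 2) (by positivity)
  have hg2 : (fun ξ : E => (-(4 * Real.pi ^ 2 * t) * ‖ξ‖ ^ 2 *
      Real.exp (-(2 * Real.pi ^ 2 * t ^ 2) * ‖ξ‖ ^ 2))).HasTemperateGrowth :=
    ((Function.HasTemperateGrowth.const _).mul (Function.hasTemperateGrowth_norm_sq E)).mul hg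
  have := plancherel_inv (SchwartzMap.smulLeftCLM ℂ (fun ξ : E => (-(4 * Real.pi ^ 2 * t) * ‖ξ‖ ^ 2 *
      Real.exp (-(2 * Real.pi ^ 2 * t ^ 2) * ‖ξ‖ ^ 2))) F)
  simp only [SchwartzMap.smulLeftCLM_apply hg2] at this
  simp only [fderiv_t13]
  exact this

lemma fderiv_x13 (t : ℝ) (x m : E) : fderiv ℝ (ext13 F) (t, x) (0, m) =
    𝓕⁻ (fun ξ => (2 * Real.pi * Complex.I) • (inner ℝ ξ m) •
      Real.exp (-(2 * Real.pi ^ 2 * t ^ 2) * ‖ξ‖ ^ 2) • F ξ) x := by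
  have h1 : HasFDerivAt (ext13 F) (fderiv ℝ (ext13 F) (t, x)) (t, x) :=
    (((smooth13 F).differentiable (by simp)) (t, x)).hasFDerivAt
  have h2 : HasFDerivAt (fun x : E => (t, x)) (ContinuousLinearMap.inr ℝ ℝ E) x :=
    hasFDerivAt_prodMk_right t x
  have hg := gau_tg (E := E) (2 * Real.pi ^ 2 * t ^ 2) (by positivity)
  have hm : (fun ξ : E => inner ℝ ξ m).HasTemperateGrowth := by fun_prop
  have h4 : (ext13 F ∘ fun x : E => (t, x)) =
      ⇑(𝓕⁻ (SchwartzMap.smulLeftCLM ℂ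
        (fun ξ : E => Real.exp (-(2 * Real.pi ^ 2 * t ^ 2) * ‖ξ‖ ^ 2)) F) : 𝓢(E, ℂ)) := by
    rw [SchwartzMap.fourierInv_coe, SchwartzMap.smulLeftCLM_apply hg]
    rfl
  have h3 := (h1.comp x h2).fderiv
  have h5 := congrArg (fun L => L m) h3
  simp only [ContinuousLinearMap.comp_apply, ContinuousLinearMap.inr_apply] at h5
  rw [← h5, h4, ← SchwartzMap.lineDerivOp_apply_eq_fderiv, SchwartzMap.lineDerivOp_fourierInv_eq,
    SchwartzMap.fourierInv_coe]
  refine congrArg (fun h : E → ℂ => 𝓕⁻ h x) ?_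
  funext ξ
  rw [smul_apply, SchwartzMap.smulLeftCLM_apply_apply hm,
    SchwartzMap.smulLeftCLM_apply_apply hg]

lemma energy_x13 (t : ℝ) (m : E) :
    ∫⁻ x, (‖fderiv ℝ (ext13 F) (t, x) (0, m)‖₊ : ℝ≥0∞) ^ 2 =
    ∫⁻ ξ, (‖(2 * Real.pi * Complex.I) • (inner ℝ ξ m) •
      Real.exp (-(2 * Real.pi ^ 2 * t ^ 2) * ‖ξ‖ ^ 2) • F ξ‖₊ : ℝ≥0∞) ^ 2 := by
  have hg := gau_tg (E := E) (2 * Real.pi ^ 2 * t ^ 2) (by positivity)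
  have hm : (fun ξ : E => inner ℝ ξ m).HasTemperateGrowth := by fun_prop
  have := plancherel_inv ((2 * Real.pi * Complex.I) •
    SchwartzMap.smulLeftCLM ℂ (fun ξ : E => inner ℝ ξ m)
      (SchwartzMap.smulLeftCLM ℂ
        (fun ξ : E => Real.exp (-(2 * Real.pi ^ 2 * t ^ 2) * ‖ξ‖ ^ 2)) F))
  have e : ⇑((2 * Real.pi * Complex.I) •
    SchwartzMap.smulLeftCLM ℂ (fun ξ : E => inner ℝ ξ m)
      (SchwartzMap.smulLeftCLM ℂ
        (fun ξ : E => Real.exp (-(2 * Real.pi ^ 2 * t ^ 2) * ‖ξ‖ ^ 2)) F)) =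
      fun ξ => (2 * Real.pi * Complex.I) • (inner ℝ ξ m) •
      Real.exp (-(2 * Real.pi ^ 2 * t ^ 2) * ‖ξ‖ ^ 2) • F ξ := by
    ext ξ
    rw [smul_apply, SchwartzMap.smulLeftCLM_apply_apply hm,
      SchwartzMap.smulLeftCLM_apply_apply hg]
  rw [e] at this
  simp only [fderiv_x13]
  exact this

lemma time13 (r : ℝ) (hr : 0 ≤ r) :
    ∫⁻ t in Set.Ioi (0:ℝ), ENNReal.ofReal
      (8 * Real.pi ^ 2 * r ^ 2 * Real.exp (-(2 * Real.pi ^ 2 * r ^ 2) * t ^ 2)) ≤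
    ENNReal.ofReal (8 * Real.pi ^ 2) * ENNReal.ofReal r := by
  rcases hr.eq_or_lt with rfl | hr
  · simp
  refine (setLIntegral_le_lintegral _ _).trans ?_
  have hb : 0 < 2 * Real.pi ^ 2 * r ^ 2 := by positivity
  rw [← ofReal_integral_eq_lintegral_ofReal ((integrable_exp_neg_mul_sq hb).const_mul _)
    (Filter.Eventually.of_forall fun t => by positivity), integral_const_mul, integral_gaussian,
    ← ENNReal.ofReal_mul (by positivity)]
  apply ENNReal.ofReal_le_ofReal
  have : √(Real.pi / (2 * Real.pi ^ 2 * r ^ 2)) ≤ 1 / r := by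
    apply Real.sqrt_le_iff.2 ⟨by positivity, ?_⟩
    rw [div_pow, div_le_div_iff₀ (by positivity) (by positivity)]
    have := Real.pi_gt_three
    have h : Real.pi ≤ 2 * Real.pi ^ 2 := by nlinarith
    have := mul_le_mul_of_nonneg_right h (sq_nonneg r)
    linarith
  calc _ ≤ 8 * Real.pi ^ 2 * r ^ 2 * (1 / r) := by gcongr
    _ = _ := by field_simp
end

lemma pointwise13 {n : ℕ} (t : ℝ) (ξ : EuclideanSpace ℝ (Fin n)) (z : ℂ) :
    (‖(-(4 * Real.pi ^ 2 * t) * ‖ξ‖ ^ 2 *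
      Real.exp (-(2 * Real.pi ^ 2 * t ^ 2) * ‖ξ‖ ^ 2)) • z‖₊ : ℝ≥0∞) ^ 2 +
    ∑ j, (‖(2 * Real.pi * Complex.I) • (inner ℝ ξ (EuclideanSpace.single j (1:ℝ))) •
      Real.exp (-(2 * Real.pi ^ 2 * t ^ 2) * ‖ξ‖ ^ 2) • z‖₊ : ℝ≥0∞) ^ 2 ≤
    ENNReal.ofReal (8 * Real.pi ^ 2 * ‖ξ‖ ^ 2 *
      Real.exp (-(2 * Real.pi ^ 2 * ‖ξ‖ ^ 2) * t ^ 2)) * (‖z‖₊ : ℝ≥0∞) ^ 2 := by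
  have conv : ∀ w : ℂ, (‖w‖₊ : ℝ≥0∞) ^ 2 = ENNReal.ofReal (‖w‖ ^ 2) := fun w => by
    rw [ENNReal.ofReal_pow (norm_nonneg _), ofReal_norm, enorm_eq_nnnorm]
  simp only [conv]
  rw [← ENNReal.ofReal_sum_of_nonneg (fun _ _ => by positivity),
    ← ENNReal.ofReal_add (by positivity) (Finset.sum_nonneg fun _ _ => by positivity),
    ← ENNReal.ofReal_mul (by positivity)]
  apply ENNReal.ofReal_le_ofReal
  have hs : ‖ξ‖ ^ 2 = ∑ j, ξ j ^ 2 := by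
    rw [EuclideanSpace.norm_sq_eq]; simp
  have e0 : -(2 * Real.pi ^ 2 * ‖ξ‖ ^ 2) * t ^ 2 = -(2 * Real.pi ^ 2 * t ^ 2) * ‖ξ‖ ^ 2 := by ring
  rw [e0]
  set g := Real.exp (-(2 * Real.pi ^ 2 * t ^ 2) * ‖ξ‖ ^ 2) with hgdef
  have hg : 0 < g := Real.exp_pos _
  have hsum : ∑ j, ‖(2 * Real.pi * Complex.I) • (inner ℝ ξ (EuclideanSpace.single j (1:ℝ))) •
      g • z‖ ^ 2 = 4 * Real.pi ^ 2 * ‖ξ‖ ^ 2 * g ^ 2 * ‖z‖ ^ 2 := by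
    rw [hs, Finset.mul_sum, Finset.sum_mul, Finset.sum_mul]
    refine Finset.sum_congr rfl fun j _ => ?_
    rw [EuclideanSpace.inner_single_right]
    simp only [norm_smul, norm_mul, Complex.norm_I, Complex.norm_real, Real.norm_eq_abs, mul_pow,
      sq_abs]
    simp
    ring
  rw [hsum]
  simp only [norm_smul, Real.norm_eq_abs, mul_pow, sq_abs]
  have hy : (1 + 2 * (2 * Real.pi ^ 2 * t ^ 2 * ‖ξ‖ ^ 2)) * g ≤ 2 := by
    have h1 := Real.add_one_le_exp (2 * Real.pi ^ 2 * t ^ 2 * ‖ξ‖ ^ 2)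
    have h2 : g * Real.exp (2 * Real.pi ^ 2 * t ^ 2 * ‖ξ‖ ^ 2) = 1 := by
      rw [hgdef, ← Real.exp_add]; simp
    nlinarith
  have : 0 ≤ 4 * Real.pi ^ 2 * ‖ξ‖ ^ 2 * g * ‖z‖ ^ 2 := by positivity
  calc _ = (4 * Real.pi ^ 2 * ‖ξ‖ ^ 2 * g * ‖z‖ ^ 2) *
        ((1 + 2 * (2 * Real.pi ^ 2 * t ^ 2 * ‖ξ‖ ^ 2)) * g) := by ring
    _ ≤ (4 * Real.pi ^ 2 * ‖ξ‖ ^ 2 * g * ‖z‖ ^ 2) * 2 := by gcongr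
    _ = _ := by ring

theorem stmt13 {n : ℕ} (hn : 1 ≤ n) :
    ∃ C : ℝ, 0 < C ∧
      ∀ f : 𝓢(EuclideanSpace ℝ (Fin n), ℂ),
        ∃ u : ℝ × EuclideanSpace ℝ (Fin n) → ℂ,
          ContinuousOn u
            (Set.Ici (0 : ℝ) ×ˢ (Set.univ : Set (EuclideanSpace ℝ (Fin n)))) ∧
          ContDiffOn ℝ (⊤ : ℕ∞) u
            (Set.Ioi (0 : ℝ) ×ˢ (Set.univ : Set (EuclideanSpace ℝ (Fin n)))) ∧
          (∀ x, u (0, x) = f x) ∧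
          (∫⁻ p in Set.Ioi (0 : ℝ) ×ˢ (Set.univ : Set (EuclideanSpace ℝ (Fin n))),
              ((‖fderiv ℝ u p (1, 0)‖₊ : ℝ≥0∞) ^ 2 +
                ∑ j, (‖fderiv ℝ u p (0, EuclideanSpace.single j 1)‖₊ : ℝ≥0∞) ^ 2)) ≤
            ENNReal.ofReal C *
              ∫⁻ ξ : EuclideanSpace ℝ (Fin n),
                (‖ξ‖₊ : ℝ≥0∞) * (‖𝓕 (⇑f) ξ‖₊ : ℝ≥0∞) ^ 2 := by
  refine ⟨8 * Real.pi ^ 2, by positivity, fun f => ⟨ext13 (𝓕 f), (smooth13 _).continuous.continuousOn,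
    (smooth13 _).contDiffOn, ?_, ?_⟩⟩
  · intro x
    have h : 𝓕⁻ (⇑(𝓕 f : 𝓢(EuclideanSpace ℝ (Fin n), ℂ))) x = f x := by
      rw [← SchwartzMap.fourierInv_coe, FourierTransform.fourierInv_fourier_eq]
    simpa [ext13] using h
  set F : 𝓢(EuclideanSpace ℝ (Fin n), ℂ) := 𝓕 f with hFdef
  have hF := F.continuous
  have hmeas : ∀ v, Measurable fun p => (‖fderiv ℝ (ext13 F) p v‖₊ : ℝ≥0∞) ^ 2 := fun v =>
    ((measurable_fderiv_apply_const ℝ (ext13 F) v).nnnorm.coe_nnreal_ennreal).pow_const 2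
  rw [show (volume : Measure (ℝ × EuclideanSpace ℝ (Fin n))) = volume.prod volume from rfl,
    ← Measure.prod_restrict, Measure.restrict_univ, lintegral_prod _ ?_]
  swap
  · exact Measurable.aemeasurable (Measurable.add (hmeas _)
        (Finset.measurable_fun_sum _ fun j _ => hmeas _))
  have hsec : ∀ v (t : ℝ), Measurable fun x => (‖fderiv ℝ (ext13 F) (t, x) v‖₊ : ℝ≥0∞) ^ 2 :=
    fun v t => (hmeas v).comp measurable_prodMk_left
  calc _ ≤ ∫⁻ t in Set.Ioi (0:ℝ), ∫⁻ ξ : EuclideanSpace ℝ (Fin n),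
        ENNReal.ofReal (8 * Real.pi ^ 2 * ‖ξ‖ ^ 2 *
          Real.exp (-(2 * Real.pi ^ 2 * ‖ξ‖ ^ 2) * t ^ 2)) * (‖F ξ‖₊ : ℝ≥0∞) ^ 2 := by
        refine lintegral_mono fun t => ?_
        rw [lintegral_add_left (hsec _ t), lintegral_finsetSum _ fun j _ => hsec _ t, energy_t13]
        simp only [energy_x13]
        rw [← lintegral_finsetSum _ fun j _ => Continuous.measurable (by fun_prop),
          ← lintegral_add_left (Continuous.measurable (by fun_prop))]
        exact lintegral_mono fun ξ => pointwise13 t ξ (F ξ)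
    _ = ∫⁻ ξ : EuclideanSpace ℝ (Fin n), ∫⁻ t in Set.Ioi (0:ℝ),
        ENNReal.ofReal (8 * Real.pi ^ 2 * ‖ξ‖ ^ 2 *
          Real.exp (-(2 * Real.pi ^ 2 * ‖ξ‖ ^ 2) * t ^ 2)) * (‖F ξ‖₊ : ℝ≥0∞) ^ 2 := by
        apply lintegral_lintegral_swap
        apply Measurable.aemeasurable
        have := hF.measurable
        simp only [Function.uncurry_def]
        fun_prop
    _ ≤ ∫⁻ ξ : EuclideanSpace ℝ (Fin n), ENNReal.ofReal (8 * Real.pi ^ 2) *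
          ((‖ξ‖₊ : ℝ≥0∞) * (‖F ξ‖₊ : ℝ≥0∞) ^ 2) := by
        refine lintegral_mono fun ξ => ?_
        simp only
        rw [lintegral_mul_const _ (by fun_prop), ← mul_assoc]
        gcongr
        refine (time13 ‖ξ‖ (norm_nonneg _)).trans (le_of_eq ?_)
        rw [ofReal_norm, enorm_eq_nnnorm]
    _ = _ := by
        rw [lintegral_const_mul' _ _ ENNReal.ofReal_ne_top]
        rfl
end
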